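/- arXiv:1309.5618 — 2 statements merged into one kernel-verified Lean document; each statement's English description precedes it below -/
import Mathlib

section
/- Let T be a string of length n and 1 ≤ i ≤ j ≤ n. Then there exists a j-active position in [i, j], and if μ is the smallest j-active position with i ≤ μ ≤ j, then T[μ..j] is the maximal suffix of T[i..j]. -/
/-!
The `j`-suffixes `T[q..j]` with `i ≤ q ≤ j` are exactly the nonempty suffixes of `T[i..j]`
(`substr_eq_drop`, `exists_substr_of_suffix`). Choose `q` in `[i, j]` with `T[q..j]`
lexicographically largest. Such a `q` is `j`-active, which gives existence. If `μ` is the smallest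
`j`-active position in `[i, j]`, then `μ ≤ q`, and activity of `μ` gives `T[μ..j] ⪰ T[q..j]`;
hence `T[μ..j]` is also lexicographically largest.
-/

variable {α : Type*} [LinearOrder α]

/-- `substr T i j` is the 1-indexed substring `T[i..j]` (inclusive). -/
def substr (T : List α) (i j : ℕ) : List α := (T.drop (i - 1)).take (j - i + 1)

/-- Position `p` is `j`-active in `T`: there is no position `p'` with `p < p' ≤ j` and
`T[p'..j] ≻ T[p..j]`. -/
def JActive (T : List α) (p j : ℕ) : Prop :=
  ∀ p', p < p' → p' ≤ j → ¬ List.Lex (· < ·) (substr T p j) (substr T p' j)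

/-- `s` is the lexicographically maximal nonempty suffix of `w`. -/
def IsMaxSuffix (w s : List α) : Prop :=
  s ≠ [] ∧ s <:+ w ∧ ∀ t, t ≠ [] → t <:+ w → ¬ List.Lex (· < ·) s t

theorem substr_eq_drop (T : List α) {i p j : ℕ} (hi : 1 ≤ i) (hip : i ≤ p) (hpj : p ≤ j) :
    substr T p j = (substr T i j).drop (p - i) := by
  unfold substr
  rw [List.drop_take, List.drop_drop]
  congr 2 <;> omega

theorem length_substr (T : List α) {i j : ℕ} (hi : 1 ≤ i) (hij : i ≤ j) (hj : j ≤ T.length) :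
    (substr T i j).length = j - i + 1 := by
  simp only [substr, List.length_take, List.length_drop]
  omega

theorem exists_substr_of_suffix (T : List α) {i j : ℕ} (hi : 1 ≤ i) (hij : i ≤ j)
    (hj : j ≤ T.length) {t : List α} (ht : t ≠ []) (hs : t <:+ substr T i j) :
    ∃ q, i ≤ q ∧ q ≤ j ∧ substr T q j = t := by
  have hlen := length_substr T hi hij hj
  have hle := hs.length_le
  have hpos := List.length_pos_iff.mpr ht
  refine ⟨j + 1 - t.length, by omega, by omega, ?_⟩
  rw [substr_eq_drop T hi (by omega) (by omega), List.suffix_iff_eq_drop.mp hs]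
  congr 1
  simp only [List.length_drop]
  omega

/-- A lexicographically largest `j`-suffix starting in `[i, j]`. -/
theorem exists_max_substr (T : List α) {i j : ℕ} (hij : i ≤ j) :
    ∃ q, i ≤ q ∧ q ≤ j ∧ ∀ p, i ≤ p → p ≤ j → substr T p j ≤ substr T q j := by
  obtain ⟨q, hq, hmax⟩ := Finset.exists_max_image (Finset.Icc i j) (fun p => substr T p j)
    ⟨i, Finset.mem_Icc.mpr ⟨le_rfl, hij⟩⟩
  rw [Finset.mem_Icc] at hq
  exact ⟨q, hq.1, hq.2, fun p h1 h2 => hmax p (Finset.mem_Icc.mpr ⟨h1, h2⟩)⟩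

/-- Let `T` be a string of length `n` and `1 ≤ i ≤ j ≤ n`.  Then there exists a `j`-active
position in `[i, j]`, and if `μ` is the smallest `j`-active position with `i ≤ μ ≤ j`, then
`T[μ..j]` is the maximal suffix of `T[i..j]`. -/
theorem stmt_12 (T : List α) (i j : ℕ)
    (hi : 1 ≤ i) (hij : i ≤ j) (hj : j ≤ T.length) :
    (∃ q, i ≤ q ∧ q ≤ j ∧ JActive T q j) ∧
    ∀ μ, i ≤ μ → μ ≤ j → JActive T μ j →
      (∀ q, i ≤ q → q ≤ j → JActive T q j → μ ≤ q) →
      IsMaxSuffix (substr T i j) (substr T μ j) := by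
  obtain ⟨q, hiq, hqj, hmax⟩ := exists_max_substr T hij
  have hact : JActive T q j := fun p hqp hpj hlt =>
    not_lt_of_ge (hmax p (hiq.trans hqp.le) hpj) (List.lt_iff_lex_lt _ _ |>.mpr hlt)
  refine ⟨⟨q, hiq, hqj, hact⟩, fun μ hiμ hμj hμ hmin => ⟨?_, ?_, ?_⟩⟩
  · rw [← List.length_pos_iff, length_substr T (hi.trans hiμ) hμj hj]
    omega
  · rw [substr_eq_drop T hi hiμ hμj]
    exact List.drop_suffix _ _
  · intro t ht hs hlt
    obtain ⟨p, hip, hpj, rfl⟩ := exists_substr_of_suffix T hi hij hj ht hs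
    have hμq : substr T q j ≤ substr T μ j := by
      rcases (hmin q hiq hqj hact).eq_or_lt with rfl | h
      · exact le_rfl
      · exact le_of_not_gt fun h' => hμ q h hqj (List.lt_iff_lex_lt _ _ |>.mp h')
    exact not_lt_of_ge ((hmax p hip hpj).trans hμq) (List.lt_iff_lex_lt _ _ |>.mpr hlt)
end

section
/- Let x be a nonempty string, w any string, and k ≥ 0 an integer. If lcp(x·w, w) ≥ k·|x|, then x^k is a prefix of w (equivalently, x^{k+1} is a prefix of x·w). -/
/-!
The proof is by induction on `k`. If `x^k` is a prefix of `w`, then `x^(k+1) = x·x^k` is a prefix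
of `x·w`; when its length `(k+1)·|x|` is at most `lcp(x·w, w)`, it is a prefix of `w` as well
(`prefix_of_length_le_lcp`).
-/

variable {α : Type*} [LinearOrder α]

/-- `lrep w a` is `w^a`, the concatenation of `a` copies of `w`. -/
def lrep (w : List α) (a : ℕ) : List α := (List.replicate a w).flatten

/-- `lcp u v` is the length of the longest common prefix of `u` and `v`. -/
def lcp : List α → List α → ℕ
  | a :: as, b :: bs => if a = b then lcp as bs + 1 else 0
  | _, _ => 0

/-- A prefix of `u` no longer than `lcp u v` is also a prefix of `v`. -/
theorem prefix_of_length_le_lcp (p u v : List α) (hp : p <+: u) (hl : p.length ≤ lcp u v) :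
    p <+: v := by
  induction p generalizing u v with
  | nil => exact List.nil_prefix
  | cons c p ih =>
    cases u with
    | nil => simp at hp
    | cons a as =>
      cases v with
      | nil => simp [lcp] at hl
      | cons b bs =>
        rw [List.cons_prefix_cons] at hp ⊢
        by_cases hab : a = b
        · simp only [lcp, hab, if_true, List.length_cons] at hl
          exact ⟨hp.1.trans hab, ih as bs hp.2 (by omega)⟩
        · simp [lcp, hab] at hl

theorem lrep_succ (x : List α) (k : ℕ) : lrep x (k + 1) = x ++ lrep x k := by
  simp [lrep, List.replicate_succ]

theorem length_lrep (x : List α) (k : ℕ) : (lrep x k).length = k * x.length := by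
  simp [lrep]

/-- Let `x` be a nonempty string, `w` any string, `k ≥ 0`.  If `lcp(x·w, w) ≥ k·|x|`, then
`x^k` is a prefix of `w` (equivalently, `x^(k+1)` is a prefix of `x·w`). -/
theorem stmt_16 (x w : List α) (k : ℕ)
    (hx : x ≠ [])
    (h : k * x.length ≤ lcp (x ++ w) w) :
    lrep x k <+: w ∧ lrep x (k + 1) <+: x ++ w := by
  have key : lrep x k <+: w := by
    induction k with
    | zero => exact List.nil_prefix
    | succ k ih =>
      have hk : lrep x k <+: w := ih (le_trans (Nat.mul_le_mul_right _ (Nat.le_succ k)) h)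
      apply prefix_of_length_le_lcp _ (x ++ w) w
      · rw [lrep_succ]
        exact (List.prefix_append_right_inj x).2 hk
      · rwa [length_lrep]
  refine ⟨key, ?_⟩
  rw [lrep_succ]
  exact (List.prefix_append_right_inj x).2 key
end
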